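/- In a queue trace q : ℕ → List α starting from the empty queue, in which dequeue steps occur infinitely often and all enqueued elements are pairwise distinct, every element that is enqueued is eventually dequeued; that is, if x is enqueued at time n, then there exists a time m > n such that q m ≠ [], (q m).head = x, and a dequeue step occurs at time m. -/

import Mathlib

/-- A queue trace: at each time step, exactly one of enqueue (at the tail),
dequeue (from the head), or idle happens. -/
def IsQueueTrace {α : Type*} (q : ℕ → List α) : Prop :=
  ∀ n, (∃ x, q (n + 1) = q n ++ [x]) ∨
    (q n ≠ [] ∧ q (n + 1) = (q n).tail) ∨
    q (n + 1) = q n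

/-- A dequeue step occurs at time `n`. -/
def DequeueAt {α : Type*} (q : ℕ → List α) (n : ℕ) : Prop :=
  q n ≠ [] ∧ q (n + 1) = (q n).tail

/-- The element `x` is enqueued at time `n`. -/
def EnqueueAt {α : Type*} (q : ℕ → List α) (n : ℕ) (x : α) : Prop :=
  q (n + 1) = q n ++ [x]

/-! The queue is first-in first-out: after `k` dequeue steps, the initial queue with its first `k`
elements removed is a prefix of the current queue. Hence the element initially at position `i` is
at the head when dequeue step number `i` takes place (both counted from `0`), and that step exists
because there are infinitely many. An element waiting at time `t` is covered by restarting the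
trace at `t`. -/

theorem infinite_setOf_add_of_forall_exists_le {p : ℕ → Prop} (hp : ∀ n, ∃ m, n ≤ m ∧ p m)
    (t : ℕ) : {k | p (t + k)}.Infinite := by
  refine Nat.frequently_atTop_iff_infinite.mp (Filter.frequently_atTop.mpr fun n => ?_)
  obtain ⟨m, hm, hpm⟩ := hp (t + n)
  obtain ⟨d, rfl⟩ := Nat.exists_eq_add_of_le hm
  exact ⟨n + d, Nat.le_add_right n d, by rwa [← Nat.add_assoc]⟩

namespace IsQueueTrace

variable {α : Type*} {q : ℕ → List α}

theorem shift (hq : IsQueueTrace q) (t : ℕ) : IsQueueTrace fun k => q (t + k) :=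
  fun k => hq (t + k)

theorem prefix_succ_of_not_dequeueAt (hq : IsQueueTrace q) {n : ℕ} (hn : ¬DequeueAt q n) :
    q n <+: q (n + 1) := by
  obtain ⟨_, henq⟩ | hdeq | hidle := hq n
  · exact henq ▸ List.prefix_append _ _
  · exact absurd hdeq hn
  · exact hidle ▸ List.prefix_rfl

theorem drop_count_dequeueAt_prefix [DecidablePred (DequeueAt q)] (hq : IsQueueTrace q) (n : ℕ) :
    (q 0).drop (Nat.count (DequeueAt q) n) <+: q n := by
  induction n with
  | zero => exact List.prefix_rfl
  | succ n ih =>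
    by_cases hn : DequeueAt q n
    · rw [Nat.count_succ, if_pos hn, hn.2, ← List.drop_drop, ← List.drop_one]
      exact ih.drop 1
    · rw [Nat.count_succ, if_neg hn]
      exact ih.trans (hq.prefix_succ_of_not_dequeueAt hn)

theorem head?_nth_dequeueAt (hq : IsQueueTrace q) (hinf : {n | DequeueAt q n}.Infinite)
    {i : ℕ} {x : α} (hx : (q 0)[i]? = some x) :
    (q (Nat.nth (DequeueAt q) i)).head? = some x := by
  classical
  have hprefix : (q 0).drop i <+: q (Nat.nth (DequeueAt q) i) := by
    simpa only [Nat.count_nth_of_infinite hinf] using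
      hq.drop_count_dequeueAt_prefix (Nat.nth (DequeueAt q) i)
  obtain ⟨l, hl⟩ := hprefix
  rw [← hl, List.head?_append, List.head?_drop, hx, Option.some_or]

end IsQueueTrace

theorem queue_starvation_free_general {α : Type*} {q : ℕ → List α} (hq : IsQueueTrace q)
    (hinf : ∀ n, ∃ m, n ≤ m ∧ DequeueAt q m) {x : α} {t : ℕ} (hx : x ∈ q t) :
    ∃ m, t ≤ m ∧ (q m).head? = some x ∧ DequeueAt q m := by
  obtain ⟨i, hi⟩ := List.mem_iff_getElem?.mp hx
  have hinf_shift : {n | DequeueAt (fun k => q (t + k)) n}.Infinite :=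
    infinite_setOf_add_of_forall_exists_le hinf t
  exact ⟨t + Nat.nth (DequeueAt fun k => q (t + k)) i, Nat.le_add_right _ _,
    (hq.shift t).head?_nth_dequeueAt hinf_shift hi, Nat.nth_mem_of_infinite hinf_shift i⟩

/-- Starvation freedom: in a trace from the empty queue with pairwise distinct
enqueued elements in which dequeue steps occur infinitely often, every enqueued
element is eventually dequeued. -/
theorem queue_starvation_free {α : Type*} (q : ℕ → List α)
    (hq : IsQueueTrace q) (h0 : q 0 = [])
    (hinf : ∀ n, ∃ m, n ≤ m ∧ DequeueAt q m)
    (hdist : ∀ n₁ n₂ x y, EnqueueAt q n₁ x → EnqueueAt q n₂ y → n₁ ≠ n₂ → x ≠ y)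
    (x : α) (n : ℕ) (hx : EnqueueAt q n x) :
    ∃ m, n < m ∧ q m ≠ [] ∧ (q m).head? = some x ∧ DequeueAt q m := by
  obtain ⟨m, hm, hhead, hdeq⟩ :=
    queue_starvation_free_general hq hinf (hx ▸ List.mem_concat_self : x ∈ q (n + 1))
  exact ⟨m, hm, hdeq.1, hhead, hdeq⟩
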